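/- For an odd prime power q, the number of vertices ⟨x,y⟩ of the graph G(q², q+1) with x² + y² ∈ H (equivalently, the number of vertices of degree q²−1, where all other vertices have degree q²) is exactly q² − 1; for q = 2^k this number is exactly q². -/

import Mathlib

/-- The scaling relation by the subgroup `H ≤ Fˣ` on nonzero pairs of field elements:
`(a₁,b₁) ∼ (a₂,b₂)` iff there is `h ∈ H` with `a₁ = h·a₂` and `b₁ = h·b₂`. -/
def Grel {F : Type} [Field F] (H : Subgroup Fˣ) (p p' : {p : F × F // p ≠ 0}) : Prop :=
  ∃ h ∈ H, p.1.1 = (h : F) * p'.1.1 ∧ p.1.2 = (h : F) * p'.1.2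

/-- The vertex set of the graph `G(q,t)`: nonzero pairs modulo scaling by `H`. -/
def GVertex (F : Type) [Field F] (H : Subgroup Fˣ) : Type :=
  Quot (Grel H)

/-- Membership of a field element in the subgroup `H ≤ Fˣ`. -/
def memH {F : Type} [Field F] (H : Subgroup Fˣ) (x : F) : Prop :=
  ∃ h ∈ H, (h : F) = x

/-- Adjacency in the graph `G(q,t)`: `⟨a,b⟩` and `⟨x,y⟩` are adjacent iff `a·x + b·y ∈ H`
(this condition is independent of the chosen representatives). -/
def GAdj {F : Type} [Field F] (H : Subgroup Fˣ) (u v : GVertex F H) : Prop :=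
  ∃ p p' : {p : F × F // p ≠ 0},
    u = Quot.mk (Grel H) p ∧ v = Quot.mk (Grel H) p' ∧
      memH H (p.1.1 * p'.1.1 + p.1.2 * p'.1.2)

/-!
The map `(x, y) ↦ ⟨x, y⟩` from nonzero pairs to vertices is `|H|`-to-one, since `H` acts freely.
The map `(x, y) ↦ x² + y²` is `N`-to-one over each `h ∈ H`, where `N` is the number of points of the
conic `x² + y² = h`. Counting the pairs with `x² + y² ∈ H` along both maps shows that there are
exactly `N` vertices with `x² + y² ∈ H`.

In odd characteristic `N = |F| - χ(-1)` for the quadratic character `χ`, by the evaluation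
`J(χ, χ) = -χ(-1)` of the Jacobi sum, and `χ(-1) = 1` when `|F|` is a square. In characteristic `2`
the conic is the line `x + y = √h`, so `N = |F|`.
-/

theorem ncard_preimage_eq_ncard_mul {α β : Type*} [Finite α] {f : α → β} {s : Set β}
    (hs : s.Finite) {n : ℕ} (hf : ∀ b ∈ s, (f ⁻¹' {b}).ncard = n) :
    (f ⁻¹' s).ncard = s.ncard * n := by
  rw [← Set.biUnion_preimage_singleton, hs.ncard_biUnion (fun _ _ => Set.toFinite _)
      (fun _ _ _ _ hab => Disjoint.preimage f (Set.disjoint_singleton.2 hab)),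
    finsum_mem_congr rfl hf, finsum_mem_eq_finite_toFinset_sum _ hs, Finset.sum_const,
    smul_eq_mul, Set.ncard_eq_toFinset_card s hs]

theorem smul_nonzero_left_injective {R M : Type*} [Ring R] [IsCancelMulZero R] [AddCommGroup M]
    [Module R M] [Module.IsTorsionFree R M] (H : Subgroup Rˣ) (x : {x : M // x ≠ 0}) :
    Function.Injective fun h : H => h • x := by
  intro h k hk
  have hval : ((h : Rˣ) : R) • x.1 = ((k : Rˣ) : R) • x.1 := congrArg Subtype.val hk
  exact Subtype.ext (Units.ext (smul_left_injective R x.2 hval))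

section Vertices

variable {F : Type} [Field F] {H : Subgroup Fˣ}

theorem grel_iff_mem_orbit {p p' : {p : F × F // p ≠ 0}} :
    Grel H p p' ↔ p ∈ MulAction.orbit H p' := by
  constructor
  · rintro ⟨h, hh, h₁, h₂⟩
    exact ⟨⟨h, hh⟩, Subtype.ext (Prod.ext h₁.symm h₂.symm)⟩
  · rintro ⟨⟨h, hh⟩, rfl⟩
    exact ⟨h, hh, rfl, rfl⟩

/-- The vertex `⟨x, y⟩` of a nonzero pair `(x, y)`, typed as a vertex rather than as an element of
the underlying quotient. -/
def GVertex.mk (H : Subgroup Fˣ) (p : {p : F × F // p ≠ 0}) : GVertex F H :=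
  Quot.mk (Grel H) p

theorem GVertex.mk_eq_mk_iff {p p' : {p : F × F // p ≠ 0}} :
    GVertex.mk H p = GVertex.mk H p' ↔ Grel H p p' := by
  have hrel : Grel H = MulAction.orbitRel H {p : F × F // p ≠ 0} :=
    funext₂ fun _ _ => propext grel_iff_mem_orbit
  exact (hrel ▸ (MulAction.orbitRel H {p : F × F // p ≠ 0}).iseqv).quot_mk_eq_iff p p'

theorem GVertex.mk_surjective (H : Subgroup Fˣ) : Function.Surjective (GVertex.mk H) :=
  Quot.exists_rep

theorem GVertex.ncard_preimage_mk_singleton (v : GVertex F H) :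
    (GVertex.mk H ⁻¹' {v}).ncard = Nat.card H := by
  obtain ⟨p, rfl⟩ := GVertex.mk_surjective H v
  have hfiber : GVertex.mk H ⁻¹' {GVertex.mk H p} = Set.range fun h : H => h • p :=
    Set.ext fun _ => GVertex.mk_eq_mk_iff.trans grel_iff_mem_orbit
  rw [hfiber]
  exact Nat.card_range_of_injective (smul_nonzero_left_injective H p)

theorem ncard_setOf_memH (H : Subgroup Fˣ) : {x : F | memH H x}.ncard = Nat.card H := by
  have himage : {x : F | memH H x} = Units.val '' (H : Set Fˣ) := rfl
  rw [himage, Set.ncard_image_of_injective _ Units.val_injective]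
  rfl

theorem Grel.memH_sq_add_sq {p p' : {p : F × F // p ≠ 0}} (hpp' : Grel H p p')
    (hp' : memH H (p'.1.1 ^ 2 + p'.1.2 ^ 2)) : memH H (p.1.1 ^ 2 + p.1.2 ^ 2) := by
  obtain ⟨h, hh, h₁, h₂⟩ := hpp'
  obtain ⟨k, hk, hkp'⟩ := hp'
  refine ⟨h ^ 2 * k, H.mul_mem (H.pow_mem hh 2) hk, ?_⟩
  rw [h₁, h₂]
  push_cast
  rw [hkp']
  ring

/-- The vertices `⟨x, y⟩` with `x² + y² ∈ H`, that is, those which would carry a loop: they are the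
vertices of exceptional degree. -/
def specialVertices (H : Subgroup Fˣ) : Set (GVertex F H) :=
  {v | ∃ p : {p : F × F // p ≠ 0}, v = Quot.mk (Grel H) p ∧ memH H (p.1.1 ^ 2 + p.1.2 ^ 2)}

theorem GVertex.mk_mem_specialVertices_iff {p : {p : F × F // p ≠ 0}} :
    GVertex.mk H p ∈ specialVertices H ↔ memH H (p.1.1 ^ 2 + p.1.2 ^ 2) :=
  ⟨fun ⟨_, hpp', hp'⟩ => (GVertex.mk_eq_mk_iff.1 hpp').memH_sq_add_sq hp', fun hp => ⟨p, rfl, hp⟩⟩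

theorem ncard_nonzero_sq_add_sq_eq {c : F} (hc : c ≠ 0) :
    {p : {p : F × F // p ≠ 0} | p.1.1 ^ 2 + p.1.2 ^ 2 = c}.ncard =
      {p : F × F | p.1 ^ 2 + p.2 ^ 2 = c}.ncard := by
  rw [← Set.ncard_image_of_injective _ Subtype.val_injective]
  congr 1
  ext p
  constructor
  · rintro ⟨p, hp, rfl⟩
    exact hp
  · intro hp
    have hp0 : p ≠ 0 := by
      rintro rfl
      exact hc (by simpa using hp.symm)
    exact ⟨⟨p, hp0⟩, hp, rfl⟩

theorem ncard_specialVertices_eq_of_forall_conic [Finite F] {N : ℕ}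
    (hN : ∀ h ∈ H, {p : F × F | p.1 ^ 2 + p.2 ^ 2 = (h : F)}.ncard = N) :
    (specialVertices H).ncard = N := by
  let sumSq : {p : F × F // p ≠ 0} → F := fun p => p.1.1 ^ 2 + p.1.2 ^ 2
  have hpreimage : GVertex.mk H ⁻¹' specialVertices H = sumSq ⁻¹' {x | memH H x} :=
    Set.ext fun _ => GVertex.mk_mem_specialVertices_iff
  have hvertices : Finite (GVertex F H) := Quot.finite _
  have hsumSq : ∀ x ∈ {x | memH H x}, (sumSq ⁻¹' {x}).ncard = N := by
    rintro _ ⟨h, hh, rfl⟩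
    exact (ncard_nonzero_sq_add_sq_eq h.ne_zero).trans (hN h hh)
  have hcount : (specialVertices H).ncard * Nat.card H = N * Nat.card H := by
    rw [← ncard_preimage_eq_ncard_mul (Set.toFinite _)
        (fun v _ => GVertex.ncard_preimage_mk_singleton v), hpreimage,
      ncard_preimage_eq_ncard_mul (Set.toFinite _) hsumSq, ncard_setOf_memH, mul_comm]
  exact Nat.eq_of_mul_eq_mul_right Nat.card_pos hcount

end Vertices

section Conics

theorem sum_mulChar_mul_mulChar_sub {R R' : Type*} [CommRing R] [Fintype R] [CommRing R']
    (χ ψ : MulChar R R') (u : Rˣ) :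
    ∑ a, χ a * ψ (u - a) = χ u * ψ u * jacobiSum χ ψ := by
  rw [jacobiSum, Finset.mul_sum, ← Equiv.sum_comp u.mulLeft]
  refine Finset.sum_congr rfl fun a _ => ?_
  rw [Units.mulLeft_apply, show (u : R) - u * a = u * (1 - a) by ring, map_mul, map_mul]
  ring

variable {F : Type*} [Field F] [Fintype F]

variable [DecidableEq F]

theorem quadraticChar_neg_one_of_isSquare_card (hF : IsSquare (Fintype.card F)) :
    quadraticChar F (-1) = 1 := by
  obtain ⟨q, hq⟩ := hF
  rw [quadraticChar_one_iff_isSquare (neg_ne_zero.2 one_ne_zero),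
    FiniteField.isSquare_neg_one_iff, hq, Nat.mul_mod]
  have hq4 : q % 4 < 4 := Nat.mod_lt q (by norm_num)
  interval_cases q % 4 <;> norm_num

theorem sum_comp_sq_eq_sum_zsmul {M : Type*} [AddCommGroup M] (hF : ringChar F ≠ 2) (g : F → M) :
    ∑ x, g (x ^ 2) = ∑ a, (quadraticChar F a + 1) • g a := by
  rw [← Finset.sum_fiberwise Finset.univ (fun x : F => x ^ 2)]
  refine Finset.sum_congr rfl fun a _ => ?_
  rw [← quadraticChar_card_sqrts hF a, natCast_zsmul, Set.toFinset_ofPred, ← Finset.sum_const]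
  exact Finset.sum_congr rfl fun x hx => congrArg g (Finset.mem_filter.1 hx).2

theorem sum_quadraticChar_mul_quadraticChar_sub (hF : ringChar F ≠ 2) {c : F} (hc : c ≠ 0) :
    ∑ a, quadraticChar F a * quadraticChar F (c - a) = -quadraticChar F (-1) := by
  have hjacobi : jacobiSum (quadraticChar F) (quadraticChar F) = -quadraticChar F (-1) := by
    simpa only [(quadraticChar_isQuadratic F).inv] using
      jacobiSum_nontrivial_inv (quadraticChar_ne_one hF)
  have hsum := sum_mulChar_mul_mulChar_sub (quadraticChar F) (quadraticChar F) (Units.mk0 c hc)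
  rwa [Units.val_mk0, ← sq, quadraticChar_sq_one hc, one_mul, hjacobi] at hsum

theorem ncard_sq_add_sq_eq_of_ringChar_ne_two (hF : ringChar F ≠ 2) {c : F} (hc : c ≠ 0) :
    ({p : F × F | p.1 ^ 2 + p.2 ^ 2 = c}.ncard : ℤ) = Fintype.card F - quadraticChar F (-1) := by
  set χ := quadraticChar F
  have hsum : ∑ a, χ a = 0 := quadraticChar_sum_zero hF
  have hsum_sub : ∑ a, χ (c - a) = 0 := ((Equiv.subLeft c).sum_comp χ).trans hsum
  calc ({p : F × F | p.1 ^ 2 + p.2 ^ 2 = c}.ncard : ℤ)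
      = ∑ x : F, ∑ y : F, if x ^ 2 + y ^ 2 = c then 1 else 0 := by
        rw [Set.ncard_eq_toFinset_card', Set.toFinset_ofPred, Finset.natCast_card_filter,
          Fintype.sum_prod_type]
    _ = ∑ x : F, ∑ b, (χ b + 1) * if x ^ 2 + b = c then 1 else 0 :=
        Finset.sum_congr rfl fun x _ =>
          sum_comp_sq_eq_sum_zsmul hF fun b => if x ^ 2 + b = c then (1 : ℤ) else 0
    _ = ∑ a, (χ a + 1) * ∑ b, (χ b + 1) * if a + b = c then 1 else 0 :=
        sum_comp_sq_eq_sum_zsmul hF fun a => ∑ b, (χ b + 1) * if a + b = c then (1 : ℤ) else 0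
    _ = ∑ a, (χ a + 1) * (χ (c - a) + 1) := by
        simp only [← eq_sub_iff_add_eq', mul_ite, mul_one, mul_zero, Finset.sum_ite_eq',
          Finset.mem_univ, if_true]
    _ = ∑ a, χ a * χ (c - a) + ∑ a, χ a + ∑ a, χ (c - a) + Fintype.card F := by
        simp only [add_mul, mul_add, mul_one, one_mul, Finset.sum_add_distrib, Finset.sum_const,
          Finset.card_univ, nsmul_eq_mul]
        ring
    _ = Fintype.card F - χ (-1) := by
        rw [sum_quadraticChar_mul_quadraticChar_sub hF hc, hsum, hsum_sub]
        ring

theorem ncard_sq_add_sq_eq_of_charP_two {R : Type*} [CommRing R] [CharP R 2] [PerfectRing R 2]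
    (c : R) : {p : R × R | p.1 ^ 2 + p.2 ^ 2 = c}.ncard = Nat.card R := by
  obtain ⟨s, rfl⟩ := surjective_frobenius R 2 c
  have hline : {p : R × R | p.1 ^ 2 + p.2 ^ 2 = frobenius R 2 s} =
      Set.range fun y => (s - y, y) := by
    ext ⟨x, y⟩
    have hsqrt : x ^ 2 + y ^ 2 = frobenius R 2 s ↔ x + y = s := by
      rw [← add_pow_char x y 2]
      exact (injective_frobenius R 2).eq_iff
    simp [hsqrt, eq_sub_iff_add_eq, eq_comm]
  rw [hline]
  exact Nat.card_range_of_injective fun _ _ h => congrArg Prod.snd h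

end Conics

theorem card_special_vertices_general {F : Type} [Field F] [Fintype F] [DecidableEq F]
    (H : Subgroup Fˣ) :
    (Odd (Fintype.card F) →
      ((specialVertices H).ncard : ℤ) = Fintype.card F - quadraticChar F (-1)) ∧
    (Even (Fintype.card F) → (specialVertices H).ncard = Fintype.card F) := by
  constructor
  · intro hodd
    have hchar : ringChar F ≠ 2 := fun hF =>
      Nat.not_even_iff_odd.2 hodd (Nat.even_iff.2 (FiniteField.even_card_of_char_two hF))
    have hconic (h : Fˣ) := ncard_sq_add_sq_eq_of_ringChar_ne_two hchar h.ne_zero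
    rw [← hconic 1, ncard_specialVertices_eq_of_forall_conic fun h _ =>
      Nat.cast_injective ((hconic h).trans (hconic 1).symm)]
  · intro heven
    have : CharP F 2 :=
      ringChar.of_eq (FiniteField.even_card_iff_char_two.2 (Nat.even_iff.1 heven))
    rw [← Nat.card_eq_fintype_card]
    exact ncard_specialVertices_eq_of_forall_conic fun h _ =>
      ncard_sq_add_sq_eq_of_charP_two (h : F)

/-- In the graph `G(q², q+1)`, the number of vertices `⟨x,y⟩` with `x² + y² ∈ H`
(equivalently the number of vertices of degree `q²−1`, all other vertices having degree
`q²`) equals `q² − 1` when `q` is odd, and equals `q²` when `q = 2^k`. -/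
theorem card_special_vertices {q : ℕ} (hq : IsPrimePow q)
    {F : Type} [Field F] [Fintype F] (hF : Fintype.card F = q ^ 2)
    (H : Subgroup Fˣ) (hH : Nat.card H = q + 1) :
    (Odd q →
      {v : GVertex F H | ∃ p : {p : F × F // p ≠ 0},
        v = Quot.mk (Grel H) p ∧ memH H (p.1.1 ^ 2 + p.1.2 ^ 2)}.ncard = q ^ 2 - 1) ∧
    ((∃ k, q = 2 ^ k) →
      {v : GVertex F H | ∃ p : {p : F × F // p ≠ 0},
        v = Quot.mk (Grel H) p ∧ memH H (p.1.1 ^ 2 + p.1.2 ^ 2)}.ncard = q ^ 2) := by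
  classical
  obtain ⟨hodd, heven⟩ := card_special_vertices_general H
  rw [hF] at hodd heven
  refine ⟨fun hq_odd => ?_, fun ⟨k, hk⟩ => heven ?_⟩
  · have hcount := hodd hq_odd.pow
    rw [quadraticChar_neg_one_of_isSquare_card (hF ▸ IsSquare.sq q)] at hcount
    exact Nat.eq_sub_of_add_eq (by exact_mod_cast eq_sub_iff_add_eq.1 hcount)
  · have hk0 : k ≠ 0 := fun h => hq.ne_one (by rw [hk, h, pow_zero])
    exact hk ▸ (even_two.pow_of_ne_zero hk0).pow_of_ne_zero two_ne_zero
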